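/- Let λ > 0 and define the Bessel Poisson kernel P_t^{[λ]}(x,y) := (2λ t / π) ∫₀^π (sin θ)^{2λ−1} / (x² + y² + t² − 2xy cos θ)^{λ+1} dθ and the conjugate kernel Q_t^{[λ]}(x,y) := −(2λ/π) ∫₀^π (x − y cos θ)(sin θ)^{2λ−1} / (x² + y² + t² − 2xy cos θ)^{λ+1} dθ. Then for each fixed y > 0, the pair u(t,x) := P_t^{[λ]}(x,y), v(t,x) := Q_t^{[λ]}(x,y) satisfies the generalized Cauchy–Riemann equations ∂_x u = −∂_t v and ∂_t u = ∂_x v + (2λ/x) v on ℝ₊ × ℝ₊. -/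

import Mathlib

/-!
Write `D = x² + y² + t² - 2xy cos θ` and `w = (sin θ)^(2λ-1)`. Since `λ > 0`, `w` is integrable on
`(0, π)` (`integrableOn_sin_rpow`), and since `D = (x - y cos θ)² + (y sin θ)² + t²` is bounded below
for `t` away from `0`, both kernels can be differentiated under the integral sign
(`hasDerivAt_weighted`). The equation `∂ₓu = -∂ₜv` then holds already between the integrands. In the
second equation, using `t² + (x - y cos θ)² = D - (y sin θ)²`, the difference of the two sides is a
multiple of the integral of
`2λ (sin θ)^(2λ-1) cos θ D^(-(λ+1)) - 2(λ+1) x y (sin θ)^(2λ+1) D^(-(λ+2))`,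
which is the `θ`-derivative of `(sin θ)^(2λ) D^(-(λ+1))`. That function vanishes at `0` and at `π`,
so the integral is zero (`integral_total_derivative`).
-/

noncomputable section
open MeasureTheory Set

/-- The Bessel Poisson kernel `P_t^{[λ]}(x,y)`. -/
def besselP (lam t x y : ℝ) : ℝ :=
  (2 * lam * t / Real.pi) * ∫ θ in Ioo (0 : ℝ) Real.pi,
    (Real.sin θ) ^ (2 * lam - 1) / (x ^ 2 + y ^ 2 + t ^ 2 - 2 * x * y * Real.cos θ) ^ (lam + 1)

/-- The conjugate Bessel Poisson kernel `Q_t^{[λ]}(x,y)`. -/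
def besselQ (lam t x y : ℝ) : ℝ :=
  -(2 * lam / Real.pi) * ∫ θ in Ioo (0 : ℝ) Real.pi,
    (x - y * Real.cos θ) * (Real.sin θ) ^ (2 * lam - 1)
      / (x ^ 2 + y ^ 2 + t ^ 2 - 2 * x * y * Real.cos θ) ^ (lam + 1)

/-! ### Integrals against the weight -/

/-- The weight is integrable although it is unbounded when `2λ < 1`: on `(0, π/2)` it is dominated by
a power of `θ` through Jordan's inequality, and `θ ↦ π - θ` exchanges the two halves. -/
lemma integrableOn_sin_rpow {lam : ℝ} (hlam : 0 < lam) :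
    IntegrableOn (fun θ : ℝ => Real.sin θ ^ (2 * lam - 1)) (Ioo 0 Real.pi) := by
  have hpi := Real.pi_pos
  have h1 : IntervalIntegrable (fun θ : ℝ => Real.sin θ ^ (2 * lam - 1)) volume 0 (Real.pi / 2) := by
    have hb : IntervalIntegrable
        (fun θ : ℝ => 1 + (2 / Real.pi) ^ (2 * lam - 1) * θ ^ (2 * lam - 1))
        volume 0 (Real.pi / 2) :=
      intervalIntegrable_const.add
        ((intervalIntegral.intervalIntegrable_rpow' (by linarith)).const_mul _)
    refine hb.mono_fun' (Real.measurable_sin.pow_const _).aestronglyMeasurable ?_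
    rw [uIoc_of_le (by positivity)]
    filter_upwards [ae_restrict_mem measurableSet_Ioc] with θ hθ
    have hs : 0 < Real.sin θ := Real.sin_pos_of_pos_of_lt_pi hθ.1 (by linarith [hθ.2])
    have hJ := Real.mul_le_sin hθ.1.le hθ.2
    have h0 : 0 < 2 / Real.pi * θ := mul_pos (by positivity) hθ.1
    rw [Real.norm_of_nonneg (Real.rpow_nonneg hs.le _),
      ← Real.mul_rpow (by positivity) hθ.1.le]
    rcases le_total 0 (2 * lam - 1) with ha | ha
    · have := Real.rpow_le_one hs.le (Real.sin_le_one θ) ha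
      have := Real.rpow_nonneg h0.le (2 * lam - 1)
      linarith
    · have := Real.rpow_le_rpow_of_nonpos h0 hJ ha
      linarith
  have h2 : IntervalIntegrable (fun θ : ℝ => Real.sin θ ^ (2 * lam - 1)) volume
      (Real.pi / 2) Real.pi := by
    have h := h1.comp_sub_left Real.pi
    simp only [Real.sin_pi_sub, sub_zero] at h
    rw [show Real.pi - Real.pi / 2 = Real.pi / 2 by ring] at h
    exact h.symm
  exact (intervalIntegrable_iff_integrableOn_Ioo_of_le hpi.le).1 (h1.trans h2)

lemma integrableOn_weight_mul {w g : ℝ → ℝ} (hw : IntegrableOn w (Ioo 0 Real.pi))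
    (hg : Continuous g) : IntegrableOn (fun θ => w θ * g θ) (Ioo 0 Real.pi) :=
  hw.mul_continuousOn_of_subset hg.continuousOn measurableSet_Ioo isCompact_Icc Ioo_subset_Icc_self

/-- Differentiation under the integral sign against an integrable weight; the domination comes from
joint continuity of the derivative on a compact rectangle. -/
lemma hasDerivAt_weighted {w : ℝ → ℝ} (hw : IntegrableOn w (Ioo 0 Real.pi)) {G G' : ℝ → ℝ → ℝ}
    {p : ℝ} (hp : 0 < p) (hG : ∀ q, 0 < q → Continuous (G q))
    (hd : ∀ q, 0 < q → ∀ θ, HasDerivAt (fun r => G r θ) (G' q θ) q)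
    (hG' : ContinuousOn (fun z : ℝ × ℝ => G' z.1 z.2) (Ioi 0 ×ˢ univ)) :
    HasDerivAt (fun q => ∫ θ in Ioo 0 Real.pi, w θ * G q θ)
      (∫ θ in Ioo 0 Real.pi, w θ * G' p θ) p := by
  have hK : IsCompact (Icc (p / 2) (2 * p) ×ˢ Icc (0 : ℝ) Real.pi) := isCompact_Icc.prod isCompact_Icc
  obtain ⟨C, hC⟩ := hK.exists_bound_of_continuousOn (hG'.mono (by
    rintro ⟨a, b⟩ ⟨h1, -⟩
    exact ⟨lt_of_lt_of_le (by positivity) h1.1, mem_univ _⟩))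
  have hGp : Continuous (G' p) := by
    rw [← continuousOn_univ]
    exact hG'.comp (f := fun θ : ℝ => (p, θ)) (by fun_prop) (fun θ _ => ⟨hp, mem_univ _⟩)
  refine (hasDerivAt_integral_of_dominated_loc_of_deriv_le (s := Icc (p / 2) (2 * p))
    (F := fun q θ => w θ * G q θ) (F' := fun q θ => w θ * G' q θ) (bound := fun θ => ‖w θ‖ * C)
    (Icc_mem_nhds (by linarith) (by linarith)) ?_ (integrableOn_weight_mul hw (hG p hp))
    (integrableOn_weight_mul hw hGp).aestronglyMeasurable ?_ (hw.norm.mul_const C) ?_).2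
  · filter_upwards [Ioi_mem_nhds hp] with q hq
    exact (integrableOn_weight_mul hw (hG q hq)).aestronglyMeasurable
  · filter_upwards [ae_restrict_mem measurableSet_Ioo] with θ hθ q hq
    rw [norm_mul]
    exact mul_le_mul_of_nonneg_left (hC (q, θ) ⟨hq, Ioo_subset_Icc_self hθ⟩) (norm_nonneg _)
  · filter_upwards with θ q hq
    exact (hd q (lt_of_lt_of_le (by positivity) hq.1) θ).const_mul _

/-! ### The denominator and its derivatives -/

/-- The common denominator `x² + y² + t² - 2xy cos θ` of the two kernels, before taking powers. -/
def den (t x y θ : ℝ) : ℝ := x ^ 2 + y ^ 2 + t ^ 2 - 2 * x * y * Real.cos θ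

lemma den_eq (t x y θ : ℝ) :
    den t x y θ = (x - y * Real.cos θ) ^ 2 + (y * Real.sin θ) ^ 2 + t ^ 2 := by
  have := Real.sin_sq_add_cos_sq θ
  unfold den
  linear_combination -y ^ 2 * this

lemma den_nonneg (t x y θ : ℝ) : 0 ≤ den t x y θ := by
  rw [den_eq]; positivity

lemma den_pos {t : ℝ} (ht : 0 < t) (x y θ : ℝ) : 0 < den t x y θ := by
  rw [den_eq]; positivity

lemma continuous_den_rpow {t : ℝ} (ht : 0 < t) (x y a : ℝ) :
    Continuous (fun θ => den t x y θ ^ a) :=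
  (by unfold den; fun_prop : Continuous (fun θ => den t x y θ)).rpow_const
    fun θ => Or.inl (den_pos ht x y θ).ne'

lemma continuousOn_den_rpow_t (x y a : ℝ) :
    ContinuousOn (fun z : ℝ × ℝ => den z.1 x y z.2 ^ a) (Ioi 0 ×ˢ univ) :=
  (by unfold den; fun_prop : Continuous (fun z : ℝ × ℝ => den z.1 x y z.2)).continuousOn.rpow_const
    fun z hz => Or.inl (den_pos hz.1 x y z.2).ne'

lemma continuousOn_den_rpow_x {t : ℝ} (ht : 0 < t) (y a : ℝ) :
    ContinuousOn (fun z : ℝ × ℝ => den t z.1 y z.2 ^ a) (Ioi 0 ×ˢ univ) :=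
  (by unfold den; fun_prop : Continuous (fun z : ℝ × ℝ => den t z.1 y z.2)).continuousOn.rpow_const
    fun z _ => Or.inl (den_pos ht z.1 y z.2).ne'

lemma hasDerivAt_den_rpow_t {t : ℝ} (ht : 0 < t) (x y θ lam : ℝ) :
    HasDerivAt (fun s => den s x y θ ^ (-(lam + 1)))
      (-(lam + 1) * (2 * t) * den t x y θ ^ (-(lam + 2))) t := by
  have h : HasDerivAt (fun s => den s x y θ) (2 * t) t := by
    unfold den
    simpa using (((hasDerivAt_id t).pow 2).const_add (x ^ 2 + y ^ 2)).sub_const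
      (2 * x * y * Real.cos θ)
  refine (h.rpow_const (p := -(lam + 1)) (Or.inl (den_pos ht x y θ).ne')).congr_deriv ?_
  rw [show -(lam + 1) - 1 = -(lam + 2) by ring]; ring

lemma hasDerivAt_den_rpow_x {t : ℝ} (ht : 0 < t) (x y θ lam : ℝ) :
    HasDerivAt (fun s => den t s y θ ^ (-(lam + 1)))
      (-(lam + 1) * (2 * (x - y * Real.cos θ)) * den t x y θ ^ (-(lam + 2))) x := by
  have h : HasDerivAt (fun s => den t s y θ) (2 * (x - y * Real.cos θ)) x := by
    unfold den
    refine ((((hasDerivAt_pow 2 x).add_const (y ^ 2)).add_const (t ^ 2)).sub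
      ((((hasDerivAt_id' x).const_mul 2).mul_const y).mul_const (Real.cos θ))).congr_deriv ?_
    norm_num
    ring
  refine (h.rpow_const (p := -(lam + 1)) (Or.inl (den_pos ht x y θ).ne')).congr_deriv ?_
  rw [show -(lam + 1) - 1 = -(lam + 2) by ring]; ring

lemma hasDerivAt_den_rpow_theta {t : ℝ} (ht : 0 < t) (x y θ lam : ℝ) :
    HasDerivAt (fun s => den t x y s ^ (-(lam + 1)))
      (-(lam + 1) * (2 * x * y * Real.sin θ) * den t x y θ ^ (-(lam + 2))) θ := by
  have h : HasDerivAt (fun s => den t x y s) (2 * x * y * Real.sin θ) θ := by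
    unfold den
    refine (((Real.hasDerivAt_cos θ).const_mul (2 * x * y)).const_sub
      (x ^ 2 + y ^ 2 + t ^ 2)).congr_deriv ?_
    ring
  refine (h.rpow_const (p := -(lam + 1)) (Or.inl (den_pos ht x y θ).ne')).congr_deriv ?_
  rw [show -(lam + 1) - 1 = -(lam + 2) by ring]; ring

/-! ### The kernels as weighted integrals -/

/-- The factor `t` of the Poisson kernel is moved inside the integral, so that the product rule in
`t` takes place in the integrand. -/
lemma besselP_eq (lam t x y : ℝ) :
    besselP lam t x y = 2 * lam / Real.pi * ∫ θ in Ioo (0 : ℝ) Real.pi,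
      Real.sin θ ^ (2 * lam - 1) * (t * den t x y θ ^ (-(lam + 1))) := by
  unfold besselP
  rw [mul_div_right_comm, mul_assoc, ← integral_const_mul]
  congr 2
  funext θ
  rw [Real.rpow_neg (den_nonneg t x y θ)]
  unfold den
  ring

lemma besselQ_eq (lam t x y : ℝ) :
    besselQ lam t x y = -(2 * lam / Real.pi) * ∫ θ in Ioo (0 : ℝ) Real.pi,
      Real.sin θ ^ (2 * lam - 1) * ((x - y * Real.cos θ) * den t x y θ ^ (-(lam + 1))) := by
  unfold besselQ
  congr 2
  funext θ
  rw [Real.rpow_neg (den_nonneg t x y θ)]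
  unfold den
  ring

/-- The integrand is the derivative of `(sin θ)^(2λ) D^(-(λ+1))`, which vanishes at both ends. -/
lemma integral_total_derivative {lam t : ℝ} (hlam : 0 < lam) (ht : 0 < t) (x y : ℝ) :
    ∫ θ in Ioo (0 : ℝ) Real.pi, Real.sin θ ^ (2 * lam - 1) *
      (2 * lam * Real.cos θ * den t x y θ ^ (-(lam + 1))
        - (lam + 1) * (2 * x * y * Real.sin θ ^ 2) * den t x y θ ^ (-(lam + 2))) = 0 := by
  have hpi := Real.pi_pos
  have hc1 := continuous_den_rpow ht x y (-(lam + 1))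
  have hc2 := continuous_den_rpow ht x y (-(lam + 2))
  have hint := integrableOn_weight_mul (integrableOn_sin_rpow hlam)
    (g := fun θ => 2 * lam * Real.cos θ * den t x y θ ^ (-(lam + 1))
        - (lam + 1) * (2 * x * y * Real.sin θ ^ 2) * den t x y θ ^ (-(lam + 2))) (by fun_prop)
  have hcs : Continuous (fun θ : ℝ => Real.sin θ ^ (2 * lam)) :=
    Real.continuous_sin.rpow_const fun _ => Or.inr (by positivity)
  have key := intervalIntegral.integral_eq_sub_of_hasDerivAt_of_le hpi.le
    (f := fun θ => Real.sin θ ^ (2 * lam) * den t x y θ ^ (-(lam + 1)))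
    (f' := fun θ => Real.sin θ ^ (2 * lam - 1) *
      (2 * lam * Real.cos θ * den t x y θ ^ (-(lam + 1))
        - (lam + 1) * (2 * x * y * Real.sin θ ^ 2) * den t x y θ ^ (-(lam + 2))))
    (hcs.mul hc1).continuousOn ?_ ((intervalIntegrable_iff_integrableOn_Ioo_of_le hpi.le).2 hint)
  · rw [intervalIntegral.integral_of_le hpi.le, integral_Ioc_eq_integral_Ioo] at key
    rw [key]
    simp [Real.zero_rpow (by positivity : 2 * lam ≠ 0)]
  · intro θ hθ
    have hs : 0 < Real.sin θ := Real.sin_pos_of_pos_of_lt_pi hθ.1 hθ.2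
    have h1 := (Real.hasDerivAt_sin θ).rpow_const (p := 2 * lam) (Or.inl hs.ne')
    refine (h1.mul (hasDerivAt_den_rpow_theta ht x y θ lam)).congr_deriv ?_
    have : Real.sin θ ^ (2 * lam) = Real.sin θ ^ (2 * lam - 1) * Real.sin θ := by
      rw [← Real.rpow_add_one hs.ne']; congr 1; ring
    rw [this]; ring

/-! ### The Cauchy–Riemann equations -/

/-- For each fixed `y > 0`, the pair `u(t,x) = P_t^{[λ]}(x,y)`, `v(t,x) = Q_t^{[λ]}(x,y)`
satisfies the generalized Cauchy–Riemann equations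
`∂_x u = −∂_t v` and `∂_t u = ∂_x v + (2λ/x) v` on `ℝ₊ × ℝ₊`. -/
theorem stmt3 (lam : ℝ) (hlam : 0 < lam) :
    ∀ y : ℝ, 0 < y → ∀ t x : ℝ, 0 < t → 0 < x →
      deriv (fun x' => besselP lam t x' y) x = - deriv (fun t' => besselQ lam t' x y) t ∧
      deriv (fun t' => besselP lam t' x y) t
        = deriv (fun x' => besselQ lam t x' y) x + (2 * lam / x) * besselQ lam t x y := by
  intro y hy t x ht hx
  have hw := integrableOn_sin_rpow hlam
  have hc1 : ∀ q, 0 < q → ∀ r, Continuous (fun θ => den q r y θ ^ (-(lam + 1))) :=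
    fun q hq r => continuous_den_rpow hq r y _
  have hc2 := continuous_den_rpow ht x y (-(lam + 2))
  have hc1t := hc1 t ht x
  have ct1 := continuousOn_den_rpow_t x y (-(lam + 1))
  have ct2 := continuousOn_den_rpow_t x y (-(lam + 2))
  have cx1 := continuousOn_den_rpow_x ht y (-(lam + 1))
  have cx2 := continuousOn_den_rpow_x ht y (-(lam + 2))
  have hPx : HasDerivAt (fun x' => besselP lam t x' y) (2 * lam / Real.pi *
      ∫ θ in Ioo (0 : ℝ) Real.pi, Real.sin θ ^ (2 * lam - 1) *
        (t * (-(lam + 1) * (2 * (x - y * Real.cos θ)) * den t x y θ ^ (-(lam + 2))))) x := by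
    simp only [besselP_eq]
    refine HasDerivAt.const_mul _ (hasDerivAt_weighted hw hx
      (G := fun q θ => t * den t q y θ ^ (-(lam + 1)))
      (G' := fun q θ => t * (-(lam + 1) * (2 * (q - y * Real.cos θ)) * den t q y θ ^ (-(lam + 2))))
      (fun q _ => (hc1 t ht q).const_mul t)
      (fun q _ θ => (hasDerivAt_den_rpow_x ht q y θ lam).const_mul t) (by fun_prop))
  have hPt : HasDerivAt (fun t' => besselP lam t' x y) (2 * lam / Real.pi *
      ∫ θ in Ioo (0 : ℝ) Real.pi, Real.sin θ ^ (2 * lam - 1) *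
        (1 * den t x y θ ^ (-(lam + 1))
          + t * (-(lam + 1) * (2 * t) * den t x y θ ^ (-(lam + 2))))) t := by
    simp only [besselP_eq]
    refine HasDerivAt.const_mul _ (hasDerivAt_weighted hw ht
      (G := fun q θ => q * den q x y θ ^ (-(lam + 1)))
      (G' := fun q θ => 1 * den q x y θ ^ (-(lam + 1))
          + q * (-(lam + 1) * (2 * q) * den q x y θ ^ (-(lam + 2))))
      (fun q hq => (hc1 q hq x).const_mul q)
      (fun q hq θ => (hasDerivAt_id q).mul (hasDerivAt_den_rpow_t hq x y θ lam)) (by fun_prop))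
  have hQx : HasDerivAt (fun x' => besselQ lam t x' y) (-(2 * lam / Real.pi) *
      ∫ θ in Ioo (0 : ℝ) Real.pi, Real.sin θ ^ (2 * lam - 1) *
        (1 * den t x y θ ^ (-(lam + 1)) + (x - y * Real.cos θ) *
          (-(lam + 1) * (2 * (x - y * Real.cos θ)) * den t x y θ ^ (-(lam + 2))))) x := by
    simp only [besselQ_eq]
    refine HasDerivAt.const_mul _ (hasDerivAt_weighted hw hx
      (G := fun q θ => (q - y * Real.cos θ) * den t q y θ ^ (-(lam + 1)))
      (G' := fun q θ => 1 * den t q y θ ^ (-(lam + 1)) + (q - y * Real.cos θ) *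
          (-(lam + 1) * (2 * (q - y * Real.cos θ)) * den t q y θ ^ (-(lam + 2))))
      (fun q _ => ?_)
      (fun q _ θ => ((hasDerivAt_id q).sub_const (y * Real.cos θ)).mul
        (hasDerivAt_den_rpow_x ht q y θ lam)) (by fun_prop))
    have := hc1 t ht q
    fun_prop
  have hQt : HasDerivAt (fun t' => besselQ lam t' x y) (-(2 * lam / Real.pi) *
      ∫ θ in Ioo (0 : ℝ) Real.pi, Real.sin θ ^ (2 * lam - 1) *
        ((x - y * Real.cos θ) * (-(lam + 1) * (2 * t) * den t x y θ ^ (-(lam + 2))))) t := by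
    simp only [besselQ_eq]
    refine HasDerivAt.const_mul _ (hasDerivAt_weighted hw ht
      (G := fun q θ => (x - y * Real.cos θ) * den q x y θ ^ (-(lam + 1)))
      (G' := fun q θ => (x - y * Real.cos θ) *
          (-(lam + 1) * (2 * q) * den q x y θ ^ (-(lam + 2))))
      (fun q hq => ?_)
      (fun q hq θ => (hasDerivAt_den_rpow_t hq x y θ lam).const_mul _) (by fun_prop))
    have := hc1 q hq x
    fun_prop
  constructor
  · rw [hPx.deriv, hQt.deriv, neg_mul, neg_neg]
    congr 2
    funext θ
    ring
  · rw [hPt.deriv, hQx.deriv, besselQ_eq]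
    have hT := integral_total_derivative hlam ht x y
    have i1 := integrableOn_weight_mul hw (g := fun θ => 1 * den t x y θ ^ (-(lam + 1)) +
      (x - y * Real.cos θ) *
        (-(lam + 1) * (2 * (x - y * Real.cos θ)) * den t x y θ ^ (-(lam + 2)))) (by fun_prop)
    have i2 := integrableOn_weight_mul hw (g := fun θ => (x - y * Real.cos θ) *
      den t x y θ ^ (-(lam + 1))) (by fun_prop)
    have i3 := integrableOn_weight_mul hw (g := fun θ =>
      2 * lam * Real.cos θ * den t x y θ ^ (-(lam + 1))
        - (lam + 1) * (2 * x * y * Real.sin θ ^ 2) * den t x y θ ^ (-(lam + 2))) (by fun_prop)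
    -- Dividing by `2λ/π`, the integrand of `∂ₜu - ∂ₓv - (2λ/x) v` is `-(y/x)` times the `θ`-derivative
    -- whose integral vanishes.
    have hsum : (∫ θ in Ioo (0 : ℝ) Real.pi, Real.sin θ ^ (2 * lam - 1) *
        (1 * den t x y θ ^ (-(lam + 1))
          + t * (-(lam + 1) * (2 * t) * den t x y θ ^ (-(lam + 2)))))
        = -(y / x) * (∫ θ in Ioo (0 : ℝ) Real.pi, Real.sin θ ^ (2 * lam - 1) *
          (2 * lam * Real.cos θ * den t x y θ ^ (-(lam + 1))
            - (lam + 1) * (2 * x * y * Real.sin θ ^ 2) * den t x y θ ^ (-(lam + 2))))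
        - (∫ θ in Ioo (0 : ℝ) Real.pi, Real.sin θ ^ (2 * lam - 1) *
          (1 * den t x y θ ^ (-(lam + 1)) + (x - y * Real.cos θ) *
            (-(lam + 1) * (2 * (x - y * Real.cos θ)) * den t x y θ ^ (-(lam + 2)))))
        - (2 * lam / x) * (∫ θ in Ioo (0 : ℝ) Real.pi, Real.sin θ ^ (2 * lam - 1) *
          ((x - y * Real.cos θ) * den t x y θ ^ (-(lam + 1)))) := by
      rw [← integral_const_mul, ← integral_const_mul, ← integral_sub (i3.const_mul _) i1,
        ← integral_sub (Integrable.sub' (i3.const_mul _) i1) (i2.const_mul _)]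
      congr 1
      funext θ
      have hD := den_pos ht x y θ
      have hp : den t x y θ ^ (-(lam + 1)) = den t x y θ ^ (-(lam + 2)) * den t x y θ := by
        rw [← Real.rpow_add_one hD.ne']; congr 1; ring
      rw [hp]
      generalize den t x y θ ^ (-(lam + 2)) = E
      generalize Real.sin θ ^ (2 * lam - 1) = W
      rw [den_eq]
      field_simp
      ring
    rw [hsum, hT]
    ring
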